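/- A linear functional ψ : L^∞[1,∞) → ℝ is an extreme point of the convex set ℳ if and only if ψ = ψ^𝒰 for some ultrafilter 𝒰 on [1,∞) containing no bounded subset of [1,∞). That is, 𝓜̃ is exactly the set of extreme points of ℳ. -/

import Mathlib

open Filter MeasureTheory

noncomputable section

/-- Lebesgue measure restricted to `[1,∞)`. -/
abbrev muIci : Measure ℝ := volume.restrict (Set.Ici (1:ℝ))

/-- `L^∞[1,∞)`. -/
abbrev Linf : Type := Lp ℝ ⊤ muIci

/-- `𝒰` is an ultrafilter on `[1,∞)` containing no bounded subset of `[1,∞)`. -/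
def UnbddUF (𝒰 : Ultrafilter ℝ) : Prop :=
  Set.Ici (1:ℝ) ∈ 𝒰 ∧ ∀ B ⊆ Set.Ici (1:ℝ), Bornology.IsBounded B → B ∉ 𝒰

/-- `M̄(f) = limsup_{x→∞} (1/x) ∫_1^x f(t) dt`. -/
def Mbar (f : Linf) : ℝ :=
  limsup (fun x : ℝ => (1 / x) * ∫ t in Set.Icc (1:ℝ) x, f t) atTop

/-- The class `ℳ` of linear functionals `ψ` on `L^∞[1,∞)` with `ψ(f) ≤ M̄(f)` for all `f`. -/
def Mcl : Set (Linf →ₗ[ℝ] ℝ) := {ψ | ∀ f : Linf, ψ f ≤ Mbar f}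

/-!
Realize a vector space `V` as functions along a filter `F` by a linear map `A`, with `e` in the role
of the constant `1`. The functionals dominated by `limsup` along `F` are then the positive
functionals with `ψ e = 1`, the states along `F`.

A positive functional along `F ⊔ G` is the sum of one along `F` and one along `G`: extend it from
the diagonal of `V × V` by the M. Riesz theorem. So if `ψ` is an extreme state along `F` and also a
state along `F ⊓ 𝓟 (s ∪ t)`, it is one along `F ⊓ 𝓟 s` or along `F ⊓ 𝓟 t`. Hence there is an
ultrafilter all of whose members `s` make `ψ` a state along `F ⊓ 𝓟 s`, and `ψ` is the limit along
it. Conversely, suppose that every `|A f|` is again of the form `A g` and let `ψ` be the limit along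
an ultrafilter. A state `φ` occurring in a convex decomposition of `ψ` kills this `g`, hence `f`,
whenever `ψ f = 0`; so `φ = ψ`.

For Cesàro means, `|x⁻¹ ∫₁ˣ f|` is again a Cesàro mean because `x ↦ |∫₁ˣ f|` is Lipschitz, hence the
primitive of a bounded function.
-/

open scoped Topology

section States

variable {V X : Type*} [AddCommGroup V] [Module ℝ V] {A : V →ₗ[ℝ] X → ℝ} {e : V} {F G : Filter X}
  {φ ψ : V →ₗ[ℝ] ℝ}

/-- The cone of the vectors whose image under `A` is eventually nonnegative along `F`; it orders `V`
as a space of functions along `F`. -/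
def eventuallyNonnegCone (A : V →ₗ[ℝ] X → ℝ) (F : Filter X) : PointedCone ℝ V where
  carrier := {f | ∀ᶠ x in F, 0 ≤ A f x}
  zero_mem' := by simp
  add_mem' hf hg := by
    filter_upwards [hf, hg] with x hfx hgx
    simpa using add_nonneg hfx hgx
  smul_mem' c f hf := by
    filter_upwards [hf] with x hfx
    rw [← Nonneg.coe_smul, map_smul]
    exact mul_nonneg c.2 hfx

lemma mem_eventuallyNonnegCone {f : V} :
    f ∈ eventuallyNonnegCone A F ↔ ∀ᶠ x in F, 0 ≤ A f x :=
  Iff.rfl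

/-- A linear functional is positive along `F` if it is nonnegative on `eventuallyNonnegCone A F`. -/
def IsPositiveAlong (A : V →ₗ[ℝ] X → ℝ) (F : Filter X) (φ : V →ₗ[ℝ] ℝ) : Prop :=
  ∀ f ∈ eventuallyNonnegCone A F, 0 ≤ φ f

/-- The states along `F`: the positive functionals normalized by `ψ e = 1`, where `e` plays the role
of the constant function `1`. -/
def statesAlong (A : V →ₗ[ℝ] X → ℝ) (e : V) (F : Filter X) : Set (V →ₗ[ℝ] ℝ) :=
  {ψ | IsPositiveAlong A F ψ ∧ ψ e = 1}

lemma statesAlong_mono (h : F ≤ G) : statesAlong A e F ⊆ statesAlong A e G :=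
  fun _ hψ => ⟨fun f hf => hψ.1 f (h hf), hψ.2⟩

lemma statesAlong_bot : statesAlong A e ⊥ = ∅ := by
  refine Set.eq_empty_of_forall_notMem fun ψ hψ => ?_
  have hneg : 0 ≤ ψ (-e) := hψ.1 (-e) (mem_eventuallyNonnegCone.2 eventually_bot)
  rw [map_neg, hψ.2] at hneg
  linarith

lemma IsPositiveAlong.apply_nonneg (hφ : IsPositiveAlong A F φ) (he : Tendsto (A e) F (𝓝 1)) :
    0 ≤ φ e :=
  hφ e (he.eventually (le_mem_nhds zero_lt_one))

lemma IsPositiveAlong.apply_le (hφ : IsPositiveAlong A F φ) (he : Tendsto (A e) F (𝓝 1)) {f : V}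
    {c : ℝ} (hf : ∀ᶠ x in F, A f x ≤ c) : φ f ≤ c * φ e := by
  have of_lt (d : ℝ) (hd : c < d) : φ f ≤ d * φ e := by
    have hde : Tendsto (fun x => d * A e x) F (𝓝 d) := by simpa using he.const_mul d
    have hpos : 0 ≤ φ (d • e - f) := hφ _ <| by
      filter_upwards [hf, hde.eventually (lt_mem_nhds hd)] with x hfx hdx
      simpa using hfx.trans hdx.le
    simpa using hpos
  exact ge_of_tendsto ((tendsto_id.mono_left nhdsWithin_le_nhds).mul_const (φ e))
    (eventually_mem_nhdsWithin.mono of_lt : ∀ᶠ d in 𝓝[>] c, φ f ≤ d * φ e)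

lemma IsPositiveAlong.eq_zero (hφ : IsPositiveAlong A F φ) (he : Tendsto (A e) F (𝓝 1))
    (hA : ∀ f, F.IsBoundedUnder (· ≤ ·) (‖A f ·‖)) (h0 : φ e = 0) : φ = 0 := by
  have nonpos (f : V) : φ f ≤ 0 := by
    obtain ⟨C, hC⟩ := hA f
    have hle : ∀ᶠ x in F, A f x ≤ C := (eventually_map.1 hC).mono fun _ => le_of_abs_le
    simpa [h0] using hφ.apply_le he hle
  ext f
  refine le_antisymm (nonpos f) ?_
  simpa using nonpos (-f)

lemma IsPositiveAlong.inv_smul_mem_statesAlong (hφ : IsPositiveAlong A F φ) (h : 0 < φ e) :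
    (φ e)⁻¹ • φ ∈ statesAlong A e F :=
  ⟨fun f hf => mul_nonneg (inv_pos.2 h).le (hφ f hf), inv_mul_cancel₀ h.ne'⟩

lemma apply_eq_of_tendsto (hψ : ψ ∈ statesAlong A e F) (he : Tendsto (A e) F (𝓝 1)) {f : V} {l : ℝ}
    (hf : Tendsto (A f) F (𝓝 l)) : ψ f = l := by
  have le_limit (g : V) (m : ℝ) (hg : Tendsto (A g) F (𝓝 m)) : ψ g ≤ m := by
    refine le_of_forall_gt_imp_ge_of_dense fun c hc => ?_
    simpa [hψ.2] using hψ.1.apply_le he (hg.eventually (ge_mem_nhds hc))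
  refine le_antisymm (le_limit f l hf) ?_
  have hneg : ψ (-f) ≤ -l := le_limit _ _ (map_neg A f ▸ hf.neg)
  simpa using hneg

lemma mem_statesAlong_of_tendsto [F.NeBot] (he : Tendsto (A e) F (𝓝 1))
    (h : ∀ f, Tendsto (A f) F (𝓝 (ψ f))) : ψ ∈ statesAlong A e F :=
  ⟨fun f hf => ge_of_tendsto (h f) hf, tendsto_nhds_unique (h e) he⟩

lemma mem_statesAlong_iff_le_limsup [F.NeBot] (he : Tendsto (A e) F (𝓝 1))
    (hA : ∀ f, F.IsBoundedUnder (· ≤ ·) (‖A f ·‖)) :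
    ψ ∈ statesAlong A e F ↔ ∀ f, ψ f ≤ limsup (A f) F := by
  constructor
  · intro hψ f
    refine le_of_forall_gt_imp_ge_of_dense fun c hc => ?_
    have hlt := eventually_lt_of_limsup_lt hc (isBoundedUnder_le_abs.1 (hA f)).1
    simpa [hψ.2] using hψ.1.apply_le he (hlt.mono fun _ => le_of_lt)
  · intro h
    have apply_neg_le (f : V) {c : ℝ} (hf : ∀ᶠ x in F, c ≤ A f x) : ψ (-f) ≤ -c :=
      (h _).trans <| limsup_le_of_le (isBoundedUnder_le_abs.1 (hA _)).2.isCoboundedUnder_le <|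
        hf.mono fun x hx => by simpa using hx
    refine ⟨fun f hf => by simpa using apply_neg_le f hf, le_antisymm ?_ ?_⟩
    · exact (h e).trans he.limsup_eq.le
    · have hneg : ψ (-e) ≤ -1 := (h _).trans_eq (Tendsto.limsup_eq (map_neg A e ▸ he.neg))
      simpa using hneg

lemma eventually_smul_add_mem_eventuallyNonnegCone (he : Tendsto (A e) F (𝓝 1)) {f : V}
    (hf : F.IsBoundedUnder (· ≤ ·) (‖A f ·‖)) :
    ∀ᶠ c : ℝ in atTop, c • e + f ∈ eventuallyNonnegCone A F := by
  obtain ⟨C, hC⟩ := hf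
  filter_upwards [eventually_ge_atTop (0 : ℝ), eventually_ge_atTop (2 * C)] with c hc0 hcC
  filter_upwards [eventually_map.1 hC, he.eventually (lt_mem_nhds one_half_lt_one)] with x hfx hex
  have hAf : -C ≤ A f x := neg_le_of_abs_le hfx
  have hAe : c * (1 / 2) ≤ c * A e x := mul_le_mul_of_nonneg_left hex.le hc0
  simp only [map_add, map_smul, Pi.add_apply, Pi.smul_apply, smul_eq_mul]
  linarith

lemma exists_add_eq_of_isPositiveAlong_sup (hψ : IsPositiveAlong A (F ⊔ G) ψ)
    (he : Tendsto (A e) (F ⊔ G) (𝓝 1)) (hA : ∀ f, (F ⊔ G).IsBoundedUnder (· ≤ ·) (‖A f ·‖)) :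
    ∃ φ₁ φ₂, IsPositiveAlong A F φ₁ ∧ IsPositiveAlong A G φ₂ ∧ φ₁ + φ₂ = ψ := by
  let diag : V →ₗ[ℝ] V × V := LinearMap.prod LinearMap.id LinearMap.id
  let onDiag : V × V →ₗ.[ℝ] ℝ :=
    ⟨LinearMap.range diag, (ψ ∘ₗ LinearMap.fst ℝ V V) ∘ₗ Submodule.subtype _⟩
  obtain ⟨Ψ, hdiag, hpos⟩ := riesz_extension
    ((eventuallyNonnegCone A F).prod (eventuallyNonnegCone A G)) onDiag
    (by
      rintro ⟨_, f, rfl⟩ ⟨hF, hG⟩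
      exact hψ f (eventually_sup.2 ⟨hF, hG⟩))
    (fun ⟨f, g⟩ => by
      obtain ⟨c, hf, hg⟩ := ((eventually_smul_add_mem_eventuallyNonnegCone he (hA f)).and
        (eventually_smul_add_mem_eventuallyNonnegCone he (hA g))).exists
      exact ⟨⟨diag (c • e), _, rfl⟩, (eventually_sup.1 hf).1, (eventually_sup.1 hg).2⟩)
  refine ⟨Ψ ∘ₗ LinearMap.inl ℝ V V, Ψ ∘ₗ LinearMap.inr ℝ V V,
    fun f hf => hpos _ ⟨hf, zero_mem _⟩, fun g hg => hpos _ ⟨zero_mem _, hg⟩, ?_⟩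
  ext f
  calc Ψ (f, 0) + Ψ (0, f) = Ψ (f, f) := by simp [← map_add]
    _ = ψ f := hdiag ⟨diag f, f, rfl⟩

lemma mem_or_mem_of_mem_extremePoints_statesAlong {H : Filter X}
    (hψ : ψ ∈ (statesAlong A e H).extremePoints ℝ) (he : Tendsto (A e) H (𝓝 1))
    (hA : ∀ f, H.IsBoundedUnder (· ≤ ·) (‖A f ·‖)) (hFG : F ⊔ G ≤ H)
    (h : ψ ∈ statesAlong A e (F ⊔ G)) : ψ ∈ statesAlong A e F ∨ ψ ∈ statesAlong A e G := by
  have hF : F ≤ H := le_sup_left.trans hFG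
  have hG : G ≤ H := le_sup_right.trans hFG
  obtain ⟨φ₁, φ₂, h₁, h₂, rfl⟩ := exists_add_eq_of_isPositiveAlong_sup h.1 (he.mono_left hFG)
    fun f => (hA f).mono hFG
  rcases (h₁.apply_nonneg (he.mono_left hF)).eq_or_lt with h₁e | h₁e
  · rw [h₁.eq_zero (he.mono_left hF) (fun f => (hA f).mono hF) h₁e.symm, zero_add] at h ⊢
    exact Or.inr ⟨h₂, h.2⟩
  rcases (h₂.apply_nonneg (he.mono_left hG)).eq_or_lt with h₂e | h₂e
  · rw [h₂.eq_zero (he.mono_left hG) (fun f => (hA f).mono hG) h₂e.symm, add_zero] at h ⊢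
    exact Or.inl ⟨h₁, h.2⟩
  have mem₁ := h₁.inv_smul_mem_statesAlong h₁e
  have mem₂ := h₂.inv_smul_mem_statesAlong h₂e
  have hseg : φ₁ + φ₂ ∈ openSegment ℝ ((φ₁ e)⁻¹ • φ₁) ((φ₂ e)⁻¹ • φ₂) :=
    ⟨φ₁ e, φ₂ e, h₁e, h₂e, h.2, by rw [smul_inv_smul₀ h₁e.ne', smul_inv_smul₀ h₂e.ne']⟩
  exact Or.inl (hψ.2 (statesAlong_mono hF mem₁) (statesAlong_mono hG mem₂) hseg ▸ mem₁)

lemma exists_ultrafilter_mem_statesAlong (hψ : ψ ∈ (statesAlong A e F).extremePoints ℝ)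
    (he : Tendsto (A e) F (𝓝 1)) (hA : ∀ f, F.IsBoundedUnder (· ≤ ·) (‖A f ·‖)) :
    ∃ U : Ultrafilter X, U ≤ F ∧ ψ ∈ statesAlong A e U := by
  -- An ultrafilter finer than `L` consists of sets `s` with `ψ ∈ statesAlong A e (F ⊓ 𝓟 s)`.
  let L : Filter X := Filter.comk (fun s => ψ ∉ statesAlong A e (F ⊓ 𝓟 s))
    (by simp [statesAlong_bot])
    (fun t ht s hst hs =>
      ht (statesAlong_mono (inf_le_inf_left F (principal_mono.2 hst)) hs))
    (fun s hs t ht hst => by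
      rw [← sup_principal, inf_sup_left] at hst
      exact (mem_or_mem_of_mem_extremePoints_statesAlong hψ he hA
        (sup_le inf_le_left inf_le_left) hst).elim hs ht)
  have hLF : L ≤ F := fun s hs => by
    have hbot : F ⊓ 𝓟 sᶜ = ⊥ := by rwa [← mem_iff_inf_principal_compl]
    simp [L, hbot, statesAlong_bot]
  have : L.NeBot := ⟨fun hL => by
    have hempty : ∅ ∈ L := hL ▸ mem_bot
    simp [L, hψ.1] at hempty⟩
  have hUL : (Ultrafilter.of L : Filter X) ≤ L := Ultrafilter.of_le L
  have mem_of_mem (s : Set X) (hs : s ∈ Ultrafilter.of L) : ψ ∈ statesAlong A e (F ⊓ 𝓟 s) := by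
    by_contra hψs
    exact Ultrafilter.compl_notMem_iff.2 hs (hUL (by simpa [L] using hψs))
  refine ⟨Ultrafilter.of L, hUL.trans hLF, fun f hf => ?_, hψ.1.2⟩
  exact (mem_of_mem _ hf).1 f (mem_inf_of_right (mem_principal_self _))

lemma exists_tendsto_of_isBoundedUnder_norm {E : Type*} [SeminormedAddCommGroup E] [ProperSpace E]
    {U : Ultrafilter X} {u : X → E} (hu : (U : Filter X).IsBoundedUnder (· ≤ ·) (‖u ·‖)) :
    ∃ l, Tendsto u U (𝓝 l) := by
  obtain ⟨C, hC⟩ := hu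
  obtain ⟨l, -, hl⟩ := (isCompact_closedBall (0 : E) C).ultrafilter_le_nhds' (U.map u) <| by
    filter_upwards [eventually_map.1 hC] with x hx
    simpa using hx
  exact ⟨l, hl⟩

lemma mem_statesAlong_ultrafilter_iff {U : Ultrafilter X} (he : Tendsto (A e) U (𝓝 1))
    (hA : ∀ f, (U : Filter X).IsBoundedUnder (· ≤ ·) (‖A f ·‖)) :
    ψ ∈ statesAlong A e U ↔ ∀ f, Tendsto (A f) U (𝓝 (ψ f)) := by
  refine ⟨fun hψ f => ?_, mem_statesAlong_of_tendsto he⟩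
  obtain ⟨l, hl⟩ := exists_tendsto_of_isBoundedUnder_norm (hA f)
  rwa [apply_eq_of_tendsto hψ he hl]

lemma IsPositiveAlong.apply_eq_zero_of_abs (hφ : IsPositiveAlong A F φ) {f g : V}
    (hg : ∀ᶠ x in F, A g x = |A f x|) (h0 : φ g = 0) : φ f = 0 := by
  have hadd : 0 ≤ φ (g + f) := hφ _ <| by
    filter_upwards [hg] with x hx
    simpa [hx, neg_le_iff_add_nonneg'] using neg_abs_le (A f x)
  have hsub : 0 ≤ φ (g - f) := hφ _ <| by
    filter_upwards [hg] with x hx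
    simpa [hx] using le_abs_self (A f x)
  rw [map_add, h0] at hadd
  rw [map_sub, h0] at hsub
  linarith

lemma mem_extremePoints_statesAlong_of_tendsto (he : Tendsto (A e) F (𝓝 1))
    (hAbs : ∀ f, ∃ g, ∀ᶠ x in F, A g x = |A f x|) [G.NeBot] (hGF : G ≤ F)
    (hψ : ∀ f, Tendsto (A f) G (𝓝 (ψ f))) : ψ ∈ (statesAlong A e F).extremePoints ℝ := by
  have mem_G : ψ ∈ statesAlong A e G := mem_statesAlong_of_tendsto (he.mono_left hGF) hψ
  refine ⟨statesAlong_mono hGF mem_G, ?_⟩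
  rintro φ₁ h₁ φ₂ h₂ ⟨a, b, ha, hb, -, rfl⟩
  set ψ := a • φ₁ + b • φ₂
  have ker_le (f : V) (hf : ψ f = 0) : φ₁ f = 0 := by
    obtain ⟨g, hg⟩ := hAbs f
    have hψg : ψ g = 0 := by
      refine tendsto_nhds_unique (hψ g) ?_
      simpa [hf] using (hψ f).abs.congr' ((hg.filter_mono hGF).mono fun _ => Eq.symm)
    have hg_mem : g ∈ eventuallyNonnegCone A F := hg.mono fun x hx => hx ▸ abs_nonneg _
    have hφ₁g : φ₁ g = 0 := by
      have hsum : a * φ₁ g + b * φ₂ g = 0 := hψg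
      have h₁g := mul_nonneg ha.le (h₁.1 g hg_mem)
      have h₂g := mul_nonneg hb.le (h₂.1 g hg_mem)
      exact (mul_eq_zero.1 (by linarith)).resolve_left ha.ne'
    exact h₁.1.apply_eq_zero_of_abs hg hφ₁g
  ext f
  have hker : φ₁ (f - ψ f • e) = 0 := ker_le _ (by simp [mem_G.2])
  rw [map_sub, map_smul, h₁.2, smul_eq_mul, mul_one] at hker
  exact sub_eq_zero.1 hker

theorem mem_extremePoints_statesAlong_iff (he : Tendsto (A e) F (𝓝 1))
    (hA : ∀ f, F.IsBoundedUnder (· ≤ ·) (‖A f ·‖))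
    (hAbs : ∀ f, ∃ g, ∀ᶠ x in F, A g x = |A f x|) :
    ψ ∈ (statesAlong A e F).extremePoints ℝ ↔
      ∃ U : Ultrafilter X, U ≤ F ∧ ∀ f, Tendsto (A f) U (𝓝 (ψ f)) := by
  constructor
  · intro hψ
    obtain ⟨U, hU, hψU⟩ := exists_ultrafilter_mem_statesAlong hψ he hA
    exact ⟨U, hU, (mem_statesAlong_ultrafilter_iff (he.mono_left hU)
      fun f => (hA f).mono hU).1 hψU⟩
  · rintro ⟨U, hU, hψU⟩
    exact mem_extremePoints_statesAlong_of_tendsto he hAbs hU hψU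

end States

section Primitives

variable {E : Type*} [NormedAddCommGroup E] {a : ℝ}

lemma integrableOn_Icc_of_Lp_Ici {p : ENNReal} (hp : 1 ≤ p)
    (f : Lp E p (volume.restrict (Set.Ici a))) (x : ℝ) : IntegrableOn f (Set.Icc a x) :=
  ((Lp.memLp f).mono_measure (Measure.restrict_mono Set.Icc_subset_Ici_self le_rfl)).integrable hp

lemma setIntegral_Icc_congr_of_ae_Ici [NormedSpace ℝ E] {f g : ℝ → E}
    (h : f =ᵐ[volume.restrict (Set.Ici a)] g) (x : ℝ) :
    ∫ t in Set.Icc a x, f t = ∫ t in Set.Icc a x, g t :=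
  integral_congr_ae (ae_restrict_of_ae_restrict_of_subset Set.Icc_subset_Ici_self h)

lemma lipschitzOnWith_setIntegral_Icc [NormedSpace ℝ E]
    (f : Lp E ⊤ (volume.restrict (Set.Ici a))) :
    LipschitzOnWith ‖f‖₊ (fun x => ∫ t in Set.Icc a x, f t) (Set.Ici a) := by
  have integrable (x : ℝ) (hx : a ≤ x) : IntervalIntegrable f volume a x :=
    (intervalIntegrable_iff_integrableOn_Icc_of_le hx).2 (integrableOn_Icc_of_Lp_Ici le_top f x)
  have norm_le : ∀ᵐ t, a ≤ t → ‖f t‖ ≤ ‖f‖ := by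
    refine (ae_restrict_iff' measurableSet_Ici).1 ?_
    rw [Lp.norm_def, toReal_eLpNorm (Lp.aestronglyMeasurable f)]
    exact ae_le_lpNorm_exponent_top (Lp.memLp f)
  refine LipschitzOnWith.of_dist_le_mul fun x hx y hy => ?_
  simp only [integral_Icc_eq_integral_Ioc, ← intervalIntegral.integral_of_le (Set.mem_Ici.1 hx),
    ← intervalIntegral.integral_of_le (Set.mem_Ici.1 hy)]
  rw [dist_eq_norm, dist_eq_norm,
    intervalIntegral.integral_interval_sub_left (integrable x hx) (integrable y hy)]
  refine intervalIntegral.norm_integral_le_of_norm_le_const_ae (norm_le.mono fun t ht htI => ht ?_)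
  exact (le_min hy hx).trans htI.1.le

lemma exists_setIntegral_Icc_eq_sub_of_lipschitzOnWith {K : NNReal} {Φ : ℝ → ℝ}
    (hΦ : LipschitzOnWith K Φ (Set.Ici a)) :
    ∃ g : Lp ℝ ⊤ (volume.restrict (Set.Ici a)),
      ∀ x, a ≤ x → ∫ t in Set.Icc a x, g t = Φ x - Φ a := by
  obtain ⟨Ψ, hΨ, hΦΨ⟩ := hΦ.extend_real
  have hderiv : MemLp (deriv Ψ) ⊤ (volume.restrict (Set.Ici a)) :=
    memLp_top_of_bound (measurable_deriv Ψ).aestronglyMeasurable K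
      (Eventually.of_forall fun _ => norm_deriv_le_of_lipschitz hΨ)
  refine ⟨hderiv.toLp, fun x hx => ?_⟩
  calc ∫ t in Set.Icc a x, hderiv.toLp _ t
      = ∫ t in Set.Icc a x, deriv Ψ t := setIntegral_Icc_congr_of_ae_Ici hderiv.coeFn_toLp x
    _ = ∫ t in a..x, deriv Ψ t := by
      rw [integral_Icc_eq_integral_Ioc, intervalIntegral.integral_of_le hx]
    _ = Ψ x - Ψ a :=
      (hΨ.lipschitzOnWith (s := Set.uIcc a x)).absolutelyContinuousOnInterval.integral_deriv_eq_sub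
    _ = Φ x - Φ a := by rw [hΦΨ hx, hΦΨ Set.self_mem_Ici]

end Primitives

section CesaroMean

/-- The Cesàro means `x ↦ (1/x) ∫_1^x f`, linearly in `f`; they realize `L^∞[1,∞)` as functions
along `atTop`. -/
def cesaroMean : Linf →ₗ[ℝ] ℝ → ℝ where
  toFun f x := (1 / x) * ∫ t in Set.Icc (1 : ℝ) x, f t
  map_add' f g := by
    ext x
    simp only [setIntegral_Icc_congr_of_ae_Ici (Lp.coeFn_add f g), Pi.add_apply]
    rw [integral_add (integrableOn_Icc_of_Lp_Ici le_top f x)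
      (integrableOn_Icc_of_Lp_Ici le_top g x), mul_add]
  map_smul' c f := by
    ext x
    simp only [setIntegral_Icc_congr_of_ae_Ici (Lp.coeFn_smul c f), Pi.smul_apply, smul_eq_mul,
      RingHom.id_apply]
    rw [integral_const_mul, mul_left_comm]

lemma cesaroMean_apply (f : Linf) (x : ℝ) :
    cesaroMean f x = (1 / x) * ∫ t in Set.Icc (1 : ℝ) x, f t :=
  rfl

lemma isBoundedUnder_norm_cesaroMean (f : Linf) :
    atTop.IsBoundedUnder (· ≤ ·) (‖cesaroMean f ·‖) := by
  refine isBoundedUnder_of_eventually_le (a := ‖f‖) ?_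
  filter_upwards [eventually_ge_atTop 1] with x hx
  have hint : ‖∫ t in Set.Icc (1 : ℝ) x, f t‖ ≤ ‖f‖ * x := by
    have hdist := (lipschitzOnWith_setIntegral_Icc f).dist_le_mul x hx 1 Set.self_mem_Ici
    calc ‖∫ t in Set.Icc (1 : ℝ) x, f t‖ ≤ ‖f‖ * (x - 1) := by
          simpa [Real.dist_eq, abs_of_nonneg (sub_nonneg.2 hx)] using hdist
      _ ≤ ‖f‖ * x := by gcongr; linarith
  rwa [cesaroMean_apply, norm_mul, Real.norm_of_nonneg (by positivity), one_div,
    inv_mul_le_iff₀ (by positivity), mul_comm]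

/-- The constant function `1` in `L^∞[1,∞)`. -/
def oneLinf : Linf :=
  (memLp_top_const (1 : ℝ)).toLp

lemma tendsto_cesaroMean_oneLinf : Tendsto (cesaroMean oneLinf) atTop (𝓝 1) := by
  have hlim : Tendsto (fun x : ℝ => 1 - x⁻¹) atTop (𝓝 1) := by
    simpa using tendsto_inv_atTop_zero.const_sub (1 : ℝ)
  refine hlim.congr' ?_
  filter_upwards [eventually_ge_atTop 1] with x hx
  have hx0 : x ≠ 0 := by positivity
  rw [cesaroMean_apply, oneLinf,
    setIntegral_Icc_congr_of_ae_Ici (memLp_top_const (1 : ℝ)).coeFn_toLp]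
  simp only [setIntegral_const, Real.volume_real_Icc_of_le hx, smul_eq_mul]
  field_simp

lemma exists_cesaroMean_eq_abs (f : Linf) :
    ∃ g : Linf, ∀ x, 1 ≤ x → cesaroMean g x = |cesaroMean f x| := by
  have hLip := LipschitzWith.comp_lipschitzOnWith (lipschitzWith_one_norm (E := ℝ))
    (lipschitzOnWith_setIntegral_Icc f)
  obtain ⟨g, hg⟩ := exists_setIntegral_Icc_eq_sub_of_lipschitzOnWith hLip
  refine ⟨g, fun x hx => ?_⟩
  simp only [cesaroMean_apply, hg x hx, abs_mul, abs_of_nonneg (by positivity : 0 ≤ 1 / x)]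
  simp

lemma Mcl_eq_statesAlong : Mcl = statesAlong cesaroMean oneLinf atTop :=
  Set.ext fun _ => (mem_statesAlong_iff_le_limsup tendsto_cesaroMean_oneLinf
    isBoundedUnder_norm_cesaroMean).symm

end CesaroMean

lemma unbddUF_iff_le_atTop {U : Ultrafilter ℝ} : UnbddUF U ↔ (U : Filter ℝ) ≤ atTop := by
  constructor
  · rintro ⟨hIci, hbdd⟩
    refine (atTop_basis_Ioi.ge_iff).2 fun M _ => ?_
    by_contra hM
    have hIcc : Set.Icc 1 M ∈ U := by
      filter_upwards [hIci, Ultrafilter.compl_mem_iff_notMem.2 hM] with x h1x hxM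
      exact ⟨h1x, not_lt.1 hxM⟩
    exact hbdd _ Set.Icc_subset_Ici_self (Metric.isBounded_Icc 1 M) hIcc
  · intro hU
    refine ⟨hU (Ici_mem_atTop 1), fun B _ hB hBU => ?_⟩
    obtain ⟨M, hM⟩ := hB.bddAbove
    obtain ⟨x, hxB, hxM⟩ := U.nonempty_of_mem (inter_mem hBU (hU (Ioi_mem_atTop M)))
    exact (hM hxB).not_gt hxM

/-- A linear functional `ψ` on `L^∞[1,∞)` is an extreme point of `ℳ`
iff `ψ = ψ^𝒰` for some ultrafilter `𝒰` on `[1,∞)` containing no bounded set;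
that is, `𝓜̃ = ex(ℳ)`. -/
theorem stmt12 (ψ : Linf →ₗ[ℝ] ℝ) :
    ψ ∈ Set.extremePoints ℝ Mcl ↔
      ∃ 𝒰 : Ultrafilter ℝ, UnbddUF 𝒰 ∧ ∀ f : Linf,
        ψ f = limUnder (𝒰 : Filter ℝ) (fun x : ℝ => (1 / x) * ∫ t in Set.Icc (1:ℝ) x, f t) := by
  rw [Mcl_eq_statesAlong, mem_extremePoints_statesAlong_iff tendsto_cesaroMean_oneLinf
    isBoundedUnder_norm_cesaroMean fun f =>
      (exists_cesaroMean_eq_abs f).imp fun _ hg => eventually_atTop.2 ⟨1, hg⟩]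
  refine exists_congr fun U => ?_
  rw [unbddUF_iff_le_atTop]
  refine and_congr_right fun hU => forall_congr' fun f => ?_
  have hlim := tendsto_nhds_limUnder <|
    exists_tendsto_of_isBoundedUnder_norm ((isBoundedUnder_norm_cesaroMean f).mono hU)
  exact ⟨fun h => h.limUnder_eq.symm, fun h => h ▸ hlim⟩
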